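/- Let E be a complex Banach space, U ⊆ E and V ⊆ ℂ open sets, and let F : E × ℂ → ℂ be holomorphic on U ×ˢ V. Let γ : ℝ → ℂ be continuously differentiable on [0,1] with γ([0,1]) ⊆ V. Then the period map u ↦ ∫_{t=0}^{1} F(u, γ(t)) · γ'(t) dt is holomorphic on U. -/

import Mathlib

/-!
The derivative is obtained by differentiating under the integral sign. The required uniform
estimates come from the Schwarz lemma for holomorphic maps between normed spaces: a holomorphic
map is locally bounded, hence locally Lipschitz, and by compactness a single radius `r` and a
single constant `K` work at all points `(x₀, γ t)`
(`exists_uniform_lipschitzOnWith_of_differentiableOn`).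
This gives the integrable Lipschitz bound `K * ‖γ'‖` near `x₀`. The Schwarz lemma applied to the
difference `u ↦ F (u, z) - F (u, w)` of two slices shows that the partial derivative in `u` at
`x₀` depends continuously on `z` (`dist_fderiv_slice_le`), so the candidate derivative is
measurable in `t`; here a direct argument is needed because the dual of `E` need not be separable.
-/

open Set Metric MeasureTheory Topology

/-- A holomorphic map between normed spaces is locally Lipschitz. -/
lemma exists_lipschitzOnWith_of_differentiableOn
    {G H : Type*} [NormedAddCommGroup G] [NormedSpace ℂ G] [NormedAddCommGroup H] [NormedSpace ℂ H]
    {f : G → H} {W : Set G} (hW : IsOpen W) (hf : DifferentiableOn ℂ f W) {p : G} (hp : p ∈ W) :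
    ∃ r > 0, ∃ K : NNReal, ball p r ⊆ W ∧ LipschitzOnWith K f (ball p r) := by
  have hc : ContinuousAt f p := hf.continuousOn.continuousAt (hW.mem_nhds hp)
  obtain ⟨R, hR, hRs⟩ := Metric.mem_nhds_iff.1
    (Filter.inter_mem (hW.mem_nhds hp) (hc.preimage_mem_nhds (ball_mem_nhds (f p) one_pos)))
  refine ⟨R / 4, by positivity, Real.toNNReal (2 / (R / 2)), ?_, ?_⟩
  · exact (ball_subset_ball (by linarith)).trans (hRs.trans inter_subset_left)
  · refine LipschitzOnWith.of_dist_le_mul fun x hx y hy => ?_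
    rw [Real.coe_toNNReal _ (by positivity)]
    -- The ball of radius `R / 2` about `y` contains `x` and stays in the ball where the
    -- oscillation of `f` is at most `2`.
    have hsub : ball y (R / 2) ⊆ ball p R := by
      apply ball_subset_ball'
      have := mem_ball.1 hy
      linarith
    have hyR : y ∈ ball p R := ball_subset_ball (by linarith) hy
    refine Complex.dist_le_div_mul_dist_of_mapsTo_ball
      (hf.mono (hsub.trans (hRs.trans inter_subset_left))) (fun w hw => ?_) ?_
    · have h1 : dist (f w) (f p) < 1 := (hRs (hsub hw)).2
      have h2 : dist (f y) (f p) < 1 := (hRs hyR).2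
      have := dist_triangle_right (f w) (f y) (f p)
      exact mem_closedBall.2 (by linarith)
    · have := dist_triangle_right x y p
      rw [mem_ball] at hx hy ⊢
      linarith

lemma exists_uniform_lipschitzOnWith_of_differentiableOn
    {G H : Type*} [NormedAddCommGroup G] [NormedSpace ℂ G] [NormedAddCommGroup H] [NormedSpace ℂ H]
    {f : G → H} {W C : Set G} (hW : IsOpen W) (hf : DifferentiableOn ℂ f W)
    (hC : IsCompact C) (hCW : C ⊆ W) :
    ∃ r > 0, ∃ K : NNReal, ∀ p ∈ C, ball p r ⊆ W ∧ LipschitzOnWith K f (ball p r) := by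
  refine hC.induction_on
    (p := fun S => ∃ r > 0, ∃ K : NNReal, ∀ p ∈ S, ball p r ⊆ W ∧ LipschitzOnWith K f (ball p r))
    ⟨1, one_pos, 0, by simp⟩ ?_ ?_ ?_
  · rintro s t hst ⟨r, hr, K, h⟩
    exact ⟨r, hr, K, fun p hp => h p (hst hp)⟩
  · rintro s t ⟨r₁, hr₁, K₁, h₁⟩ ⟨r₂, hr₂, K₂, h₂⟩
    refine ⟨min r₁ r₂, lt_min hr₁ hr₂, max K₁ K₂, ?_⟩
    rintro p (hp | hp)
    · have hs := ball_subset_ball (x := p) (min_le_left r₁ r₂)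
      exact ⟨hs.trans (h₁ p hp).1, ((h₁ p hp).2.mono hs).weaken (le_max_left _ _)⟩
    · have hs := ball_subset_ball (x := p) (min_le_right r₁ r₂)
      exact ⟨hs.trans (h₂ p hp).1, ((h₂ p hp).2.mono hs).weaken (le_max_right _ _)⟩
  · intro x hx
    obtain ⟨r, hr, K, hsub, hK⟩ := exists_lipschitzOnWith_of_differentiableOn hW hf (hCW hx)
    refine ⟨ball x (r / 2), mem_nhdsWithin_of_mem_nhds (ball_mem_nhds _ (by positivity)),
      r / 2, by positivity, K, fun p hp => ?_⟩
    have hs : ball p (r / 2) ⊆ ball x r := by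
      apply ball_subset_ball'
      have := mem_ball.1 hp
      linarith
    exact ⟨hs.trans hsub, hK.mono hs⟩

/-- Cauchy estimate for the difference of two slices: the partial derivative of `F` in the first
variable is Lipschitz in the second one. -/
lemma dist_fderiv_slice_le
    {E : Type*} [NormedAddCommGroup E] [NormedSpace ℂ E]
    {F : E × ℂ → ℂ} {x₀ : E} {z w : ℂ} {r : ℝ} {K : NNReal} (hr : 0 < r)
    (hF : DifferentiableOn ℂ F (ball (x₀, z) r)) (hK : LipschitzOnWith K F (ball (x₀, z) r))
    (hw : w ∈ ball z r) :
    dist (fderiv ℂ (fun u => F (u, z)) x₀) (fderiv ℂ (fun u => F (u, w)) x₀)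
      ≤ 2 * K / r * dist z w := by
  have hmem : ∀ v ∈ ball z r, ∀ u ∈ ball x₀ r, (u, v) ∈ ball (x₀, z) r := fun v hv u hu => by
    rw [← ball_prod_same]
    exact ⟨hu, hv⟩
  have hz : z ∈ ball z r := mem_ball_self hr
  have hd : ∀ v ∈ ball z r, DifferentiableOn ℂ (fun u => F (u, v)) (ball x₀ r) := fun v hv =>
    hF.comp (by fun_prop) (hmem v hv)
  have hda : ∀ v ∈ ball z r, DifferentiableAt ℂ (fun u => F (u, v)) x₀ := fun v hv =>
    (hd v hv).differentiableAt (ball_mem_nhds _ hr)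
  have hb : ∀ u ∈ ball x₀ r, ‖F (u, z) - F (u, w)‖ ≤ K * dist z w := fun u hu => by
    have := hK.dist_le_mul _ (hmem z hz u hu) _ (hmem w hw u hu)
    simpa [dist_eq_norm, Prod.norm_def] using this
  rw [dist_eq_norm, ← fderiv_fun_sub (hda z hz) (hda w hw)]
  refine (Complex.norm_fderiv_le_div_of_mapsTo_ball (R₂ := 2 * K * dist z w)
    ((hd z hz).sub (hd w hw)) (fun u hu => ?_) hr).trans_eq (by ring)
  rw [mem_closedBall, dist_eq_norm]
  refine (norm_sub_le _ _).trans ?_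
  have h1 := hb u hu
  have h2 := hb x₀ (mem_ball_self hr)
  simp only [Pi.sub_apply]
  linarith

/-- Let `E` be a complex Banach space, `U ⊆ E` and `V ⊆ ℂ` open sets, and
`F : E × ℂ → ℂ` holomorphic on `U ×ˢ V`. Let `γ : ℝ → ℂ` be continuously differentiable on
`[0,1]` with `γ([0,1]) ⊆ V`. Then the period map `u ↦ ∫ t in 0..1, F (u, γ t) * γ' t`
is holomorphic on `U`. -/
theorem period_map_holomorphic
    (E : Type*) [NormedAddCommGroup E] [NormedSpace ℂ E] [CompleteSpace E]
    (U : Set E) (V : Set ℂ) (hU : IsOpen U) (hV : IsOpen V)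
    (F : E × ℂ → ℂ) (hF : DifferentiableOn ℂ F (U ×ˢ V))
    (γ : ℝ → ℂ) (hγ : ContDiffOn ℝ 1 γ (Set.Icc 0 1))
    (hγV : γ '' Set.Icc (0 : ℝ) 1 ⊆ V) :
    DifferentiableOn ℂ (fun u : E => ∫ t in (0:ℝ)..1, F (u, γ t) * deriv γ t) U := by
  -- `deriv γ` may take a junk value at the endpoints, whereas `derivWithin γ (Icc 0 1)` is
  -- continuous on `[0, 1]` and agrees with it in the interior.
  set g : ℝ → ℂ := derivWithin γ (Icc 0 1) with hg
  have hgc : ContinuousOn g (Icc 0 1) :=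
    hγ.continuousOn_derivWithin (uniqueDiffOn_Icc one_pos) le_rfl
  have hint : (fun u : E => ∫ t in (0:ℝ)..1, F (u, γ t) * deriv γ t)
      = fun u : E => ∫ t in (0:ℝ)..1, F (u, γ t) * g t := by
    funext u
    refine intervalIntegral.integral_congr_Ioo_of_le zero_le_one fun t ht => ?_
    simp only [hg, derivWithin_of_mem_nhds (Icc_mem_nhds ht.1 ht.2)]
  rw [hint]
  intro x₀ hx₀
  have hγc : ContinuousOn γ (Icc 0 1) := hγ.continuousOn
  have hW : IsOpen (U ×ˢ V) := hU.prod hV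
  obtain ⟨r, hr, K, hrK⟩ := exists_uniform_lipschitzOnWith_of_differentiableOn hW hF
    (isCompact_singleton.prod (isCompact_Icc.image_of_continuousOn hγc) :
      IsCompact (({x₀} : Set E) ×ˢ (γ '' Icc 0 1)))
    (prod_mono (singleton_subset_iff.2 hx₀) hγV)
  replace hrK : ∀ t ∈ Icc (0:ℝ) 1, ball (x₀, γ t) r ⊆ U ×ˢ V ∧
      LipschitzOnWith K F (ball (x₀, γ t) r) := fun t ht =>
    hrK _ ⟨rfl, mem_image_of_mem γ ht⟩
  have hslice : ∀ u ∈ U, ContinuousOn (fun t => F (u, γ t) * g t) (Icc 0 1) := fun u hu =>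
    (hF.continuousOn.comp (by fun_prop) fun t ht => ⟨hu, hγV (mem_image_of_mem γ ht)⟩).mul hgc
  have hD : ContinuousOn (fun t => fderiv ℂ (fun u => F (u, γ t)) x₀) (Icc 0 1) := by
    intro t ht
    refine tendsto_iff_dist_tendsto_zero.2 ?_
    have hlim : Filter.Tendsto (fun s => 2 * K / r * dist (γ t) (γ s)) (𝓝[Icc 0 1] t) (𝓝 0) := by
      have := (tendsto_const_nhds (x := γ t)).dist (hγc t ht)
      simpa using this.const_mul (2 * K / r)
    refine squeeze_zero' (.of_forall fun _ => dist_nonneg) ?_ hlim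
    filter_upwards [(hγc t ht).preimage_mem_nhdsWithin (ball_mem_nhds _ hr)] with s hs
    rw [dist_comm]
    exact dist_fderiv_slice_le hr (hF.mono (hrK t ht).1) (hrK t ht).2 hs
  have hsub : uIoc (0:ℝ) 1 ⊆ Icc 0 1 := by
    rw [uIoc_of_le zero_le_one]
    exact Ioc_subset_Icc_self
  have hpair : ∀ t, ∀ u ∈ ball x₀ r, (u, γ t) ∈ ball (x₀, γ t) r := fun t u hu => by
    rw [← ball_prod_same]
    exact ⟨hu, mem_ball_self hr⟩
  refine (intervalIntegral.hasFDerivAt_integral_of_dominated_loc_of_lip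
    (F' := fun t => g t • fderiv ℂ (fun u => F (u, γ t)) x₀) (bound := fun t => K * ‖g t‖)
    (ball_mem_nhds x₀ hr) ?_ ?_ ?_ ?_ ?_ ?_).2.differentiableAt.differentiableWithinAt
  · filter_upwards [hU.mem_nhds hx₀] with u hu
    exact ((hslice u hu).mono hsub).aestronglyMeasurable measurableSet_uIoc
  · exact (hslice x₀ hx₀).intervalIntegrable_of_Icc zero_le_one
  · exact ((hgc.smul hD).mono hsub).aestronglyMeasurable measurableSet_uIoc
  · refine .of_forall fun t ht => LipschitzOnWith.of_dist_le_mul fun u hu v hv => ?_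
    have h := (hrK t (hsub ht)).2.dist_le_mul _ (hpair t u hu) _ (hpair t v hv)
    have h' : dist (u, γ t) (v, γ t) = dist u v := by simp [Prod.dist_eq]
    rw [h'] at h
    rw [Real.coe_nnabs, abs_of_nonneg (by positivity), dist_eq_norm, ← sub_mul, norm_mul,
      ← dist_eq_norm]
    calc _ ≤ K * dist u v * ‖g t‖ := by gcongr
      _ = _ := by ring
  · exact (hgc.norm.const_mul _).intervalIntegrable_of_Icc zero_le_one
  · refine .of_forall fun t ht => HasFDerivAt.mul_const (DifferentiableAt.hasFDerivAt ?_) _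
    have hFt : DifferentiableAt ℂ F (x₀, γ t) :=
      hF.differentiableAt (hW.mem_nhds ⟨hx₀, hγV (mem_image_of_mem γ (hsub ht))⟩)
    exact hFt.comp x₀ (f := fun u => (u, γ t)) (by fun_prop)
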